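/- Let G = C_{n_1} ⊕ … ⊕ C_{n_r} with r ≥ 2 and integers 1 < n_1 ≤ … ≤ n_r, let k ∈ ℕ₀, and let t ∈ [2, r] be such that n_s < Π_{i=1}^{s−1} n_i for every s ∈ [t+1, r]. Then: (1) if n_{t−1} ≠ n_t, then SD_k(G) ≥ Σ_{i ∈ [1,r], i ≠ t} (n_i − 1) + SD_{k+r−1}(C_{n_t}); (2) if k + r > 2, then SD_k(G) ≥ Σ_{i ∈ [1,r], i ≠ t} (n_i − 1) + SD_{k+r−2}(C_{n_t}). -/

import Mathlib

open Multiset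

/-- A sequence (finite multiset) over `G` is zero-sumfree if every nonempty
subsequence has nonzero sum. -/
def IsZeroSumfree {G : Type*} [AddCommMonoid G] (S : Multiset G) : Prop :=
  ∀ T ≤ S, T ≠ 0 → T.sum ≠ 0

/-- A minimal zero-sum sequence: a nonempty sequence with sum zero all of whose
nonempty proper subsequences have nonzero sum. -/
def IsMinimalZeroSum {G : Type*} [AddCommMonoid G] (S : Multiset G) : Prop :=
  S ≠ 0 ∧ S.sum = 0 ∧ ∀ T ≤ S, T ≠ 0 → T ≠ S → T.sum ≠ 0

/-- The cumulated multiplicity of level `ℓ` of a sequence: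
`cm_ℓ(S) = Σ_{g ∈ G} max {0, v_g(S) − ℓ}`. -/
noncomputable def cmul {G : Type*} [AddCommMonoid G] (ℓ : ℕ) (S : Multiset G) : ℕ :=
  letI := Classical.decEq G
  ∑ g ∈ S.toFinset, (S.count g - ℓ)

/-- `SD_{(k,ℓ)}(G)`: the maximum length of a minimal zero-sum sequence `S` over `G`
with `cm_ℓ(S) ≤ k`. -/
noncomputable def SDpair (G : Type*) [AddCommMonoid G] (k ℓ : ℕ) : ℕ :=
  sSup {m | ∃ S : Multiset G, IsMinimalZeroSum S ∧ cmul ℓ S ≤ k ∧ Multiset.card S = m}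

/-- `SD_k(G)`: the `k`-th Strong Davenport constant. -/
noncomputable def SDk (G : Type*) [AddCommMonoid G] (k : ℕ) : ℕ := SDpair G k 1

/-- The Strong Davenport constant `SD(G) = SD_0(G)`. -/
noncomputable def SD (G : Type*) [AddCommMonoid G] : ℕ := SDk G 0

/-- The Olson constant `Ol(G) = SD_1(G)`. -/
noncomputable def Ol (G : Type*) [AddCommMonoid G] : ℕ := SDk G 1

/-- `ol_k(G)`: the maximum length of a zero-sumfree sequence `S` over `G` with
`cm(S) ≤ k`. -/
noncomputable def olk (G : Type*) [AddCommMonoid G] (k : ℕ) : ℕ :=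
  sSup {m | ∃ S : Multiset G, IsZeroSumfree S ∧ cmul 1 S ≤ k ∧ Multiset.card S = m}

/-- `Ol_k(G)`: the smallest integer `ℓ` such that every sequence `S` over `G` with
`cm(S) ≤ k` and `|S| ≥ ℓ` has a nonempty zero-sum subsequence. -/
noncomputable def Olk (G : Type*) [AddCommMonoid G] (k : ℕ) : ℕ :=
  sInf {m | ∀ S : Multiset G, cmul 1 S ≤ k → m ≤ Multiset.card S →
    ∃ T, T ≤ S ∧ T ≠ 0 ∧ T.sum = 0}

/-- The Davenport constant `D(G)`: the maximum length of a minimal zero-sum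
sequence over `G`. -/
noncomputable def DavenportD (G : Type*) [AddCommMonoid G] : ℕ :=
  sSup {m | ∃ S : Multiset G, IsMinimalZeroSum S ∧ Multiset.card S = m}

/-!
Let `S` be a minimal zero-sum sequence over a finite abelian group `H` and let `A` be a sequence of
length `m` over `H` whose sum is a term `g` of `S`. Replacing `g` by the terms `(a, 1)`, `a ∈ A`,
gives a minimal zero-sum sequence over `H ⊕ C_m` that is longer by `m - 1`: a zero-sum subsequence
contains a multiple of `m` of the new terms, hence none or all of them. For `m < |H|` the nonzero
element `g` is a sum of `m` distinct elements, so the new terms are distinct; taking for `g` a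
repeated term of `S`, the cumulated multiplicity drops by one. If only `m ≤ |H|`, one element of
`A` may have to be repeated, and the cumulated multiplicity does not grow. Starting from `C_{n_t}`,
the other summands are adjoined in increasing order; when `n_t` is not strictly larger than its
predecessors, the first of these steps is of the second kind.
-/

section CumulatedMultiplicity

variable {G H : Type*} [AddCommMonoid G] [AddCommMonoid H]

lemma cmul_eq_sum [DecidableEq G] (ℓ : ℕ) (S : Multiset G) :
    cmul ℓ S = ∑ g ∈ S.toFinset, (S.count g - ℓ) := by
  unfold cmul
  congr!

lemma cmul_one_add_card_toFinset [DecidableEq G] (S : Multiset G) :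
    cmul 1 S + S.toFinset.card = card S := by
  rw [cmul_eq_sum, Finset.card_eq_sum_ones, ← Finset.sum_add_distrib,
    ← Multiset.toFinset_sum_count_eq S]
  refine Finset.sum_congr rfl fun g hg ↦ Nat.sub_add_cancel ?_
  exact Multiset.one_le_count_iff_mem.2 (Multiset.mem_toFinset.1 hg)

lemma cmul_one_eq_zero_of_nodup {S : Multiset G} (hS : S.Nodup) : cmul 1 S = 0 := by
  classical
  have hcard := cmul_one_add_card_toFinset S
  rw [Multiset.toFinset_card_of_nodup hS] at hcard
  lia

lemma cmul_one_cons_le (a : G) (S : Multiset G) : cmul 1 (a ::ₘ S) ≤ cmul 1 S + 1 := by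
  classical
  have hS := cmul_one_add_card_toFinset S
  have haS := cmul_one_add_card_toFinset (a ::ₘ S)
  have hle : S.toFinset.card ≤ (a ::ₘ S).toFinset.card :=
    Finset.card_le_card (Multiset.toFinset_subset.2 (Multiset.subset_cons S a))
  rw [Multiset.card_cons] at haS
  lia

lemma cmul_add_of_disjoint (ℓ : ℕ) {S T : Multiset G} (hST : Disjoint S T) :
    cmul ℓ (S + T) = cmul ℓ S + cmul ℓ T := by
  classical
  have hdisj : ∀ g ∈ S, g ∉ T := fun _ ↦ Multiset.disjoint_left.1 hST
  simp only [cmul_eq_sum, Multiset.toFinset_add]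
  rw [Finset.sum_union (by simpa using hST)]
  congr 1 <;> refine Finset.sum_congr rfl fun g hg ↦ ?_ <;> rw [Multiset.mem_toFinset] at hg
  · rw [Multiset.count_add, Multiset.count_eq_zero_of_notMem (hdisj g hg), add_zero]
  · rw [Multiset.count_add, Multiset.count_eq_zero_of_notMem fun h ↦ hdisj g h hg, zero_add]

lemma cmul_map_of_injective (ℓ : ℕ) {f : G → H} (hf : Function.Injective f) (S : Multiset G) :
    cmul ℓ (S.map f) = cmul ℓ S := by
  classical
  rw [cmul_eq_sum, cmul_eq_sum, Multiset.toFinset_map, Finset.sum_image hf.injOn]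
  simp only [Multiset.count_map_eq_count' f S hf]

lemma exists_mem_cmul_one_erase_le [DecidableEq G] {S : Multiset G} {k : ℕ} (hS : S ≠ 0)
    (hk : cmul 1 S ≤ k + 1) : ∃ g ∈ S, cmul 1 (S.erase g) ≤ k := by
  by_cases hnodup : S.Nodup
  · obtain ⟨g, hg⟩ := Multiset.exists_mem_of_ne_zero hS
    exact ⟨g, hg, by rw [cmul_one_eq_zero_of_nodup (hnodup.erase g)]; exact k.zero_le⟩
  · obtain ⟨g, hg⟩ : ∃ g, 1 < S.count g := by
      simpa [Multiset.nodup_iff_count_le_one] using hnodup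
    have hgS : g ∈ S := Multiset.count_pos.1 (by lia)
    have hg_erase : g ∈ S.erase g := by
      rw [← Multiset.count_pos, Multiset.count_erase_self]
      lia
    have hsupp : (S.erase g).toFinset = S.toFinset := by
      rw [← Multiset.cons_erase hgS, Multiset.toFinset_cons, Multiset.erase_cons_head,
        Finset.insert_eq_of_mem (Multiset.mem_toFinset.2 hg_erase)]
    have hcard := cmul_one_add_card_toFinset S
    have hcard_erase := cmul_one_add_card_toFinset (S.erase g)
    rw [hsupp] at hcard_erase
    have := Multiset.card_erase_add_one hgS
    exact ⟨g, hgS, by lia⟩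

end CumulatedMultiplicity

section MinimalZeroSum

variable {G H : Type*}

lemma isMinimalZeroSum_singleton_zero [AddCommMonoid G] : IsMinimalZeroSum ({0} : Multiset G) := by
  refine ⟨Multiset.singleton_ne_zero 0, Multiset.sum_singleton 0, fun T hT hT0 hTne ↦ ?_⟩
  exact absurd (Multiset.le_singleton.1 hT) (by simp [hT0, hTne])

lemma isMinimalZeroSum_pair_neg [AddCommGroup G] {g : G} (hg : g ≠ 0) :
    IsMinimalZeroSum ({g, -g} : Multiset G) := by
  refine ⟨by simp, by simp, fun T hT hT0 hTne hsum ↦ ?_⟩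
  have hlt : card T < 2 := Multiset.card_lt_card (lt_of_le_of_ne hT hTne)
  have hpos : 0 < card T := Multiset.card_pos.2 hT0
  obtain ⟨a, rfl⟩ := Multiset.card_eq_one.1 (show card T = 1 by lia)
  have ha : a ∈ ({g, -g} : Multiset G) := Multiset.singleton_le.1 hT
  rw [Multiset.sum_singleton] at hsum
  subst hsum
  exact hg (by simpa [eq_comm] using ha)

lemma IsMinimalZeroSum.ne_zero_of_mem [AddCommMonoid G] {S : Multiset G}
    (hS : IsMinimalZeroSum S) (hcard : 2 ≤ card S) {g : G} (hg : g ∈ S) : g ≠ 0 := by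
  have hne : {g} ≠ S := by
    rintro rfl
    simp at hcard
  simpa using hS.2.2 {g} (Multiset.singleton_le.2 hg) (Multiset.singleton_ne_zero g) hne

lemma IsMinimalZeroSum.map [AddCommMonoid G] [AddCommMonoid H] {S : Multiset G}
    (hS : IsMinimalZeroSum S) (f : G →+ H) (hf : Function.Injective f) :
    IsMinimalZeroSum (S.map f) := by
  obtain ⟨hS0, hsum, hmin⟩ := hS
  refine ⟨by simpa using hS0, by rw [← map_multiset_sum, hsum, f.map_zero], ?_⟩
  intro T hT hT0 hTne hTsum
  have hTmem : T ∈ (S.map f).powersetCard (card T) := Multiset.mem_powersetCard.2 ⟨hT, rfl⟩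
  rw [Multiset.powersetCard_map] at hTmem
  obtain ⟨U, hU, rfl⟩ := Multiset.mem_map.1 hTmem
  rw [← map_multiset_sum, map_eq_zero_iff f hf] at hTsum
  exact hmin U (Multiset.mem_powersetCard.1 hU).1 (by simpa using hT0)
    (ne_of_apply_ne _ hTne) hTsum

lemma card_eq_zero_or_eq_of_map_sum_eq_zero [AddCommMonoid G] {m : ℕ} (π : G →+ ZMod m)
    {T : Multiset G} (hT : ∀ x ∈ T, π x = 1) (hcard : card T ≤ m) (hsum : π T.sum = 0) :
    card T = 0 ∨ card T = m := by
  have hcast : ((card T : ℕ) : ZMod m) = 0 := by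
    rw [← hsum, map_multiset_sum, Multiset.map_congr rfl hT]
    simp
  rw [ZMod.natCast_eq_zero_iff] at hcast
  exact (Nat.eq_zero_or_pos _).imp_right fun hpos ↦ hcard.antisymm (Nat.le_of_dvd hpos hcast)

lemma IsMinimalZeroSum.erase_add [AddCommMonoid G] [DecidableEq G] {m : ℕ} (hm : m ≠ 0)
    (π : G →+ ZMod m) {S A : Multiset G} (hS : IsMinimalZeroSum S) (hAS : A.sum ∈ S)
    (hπS : ∀ x ∈ S, π x = 0) (hπA : ∀ x ∈ A, π x = 1) (hA : card A = m) :
    IsMinimalZeroSum (S.erase A.sum + A) := by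
  obtain ⟨-, hsum, hmin⟩ := hS
  have hcons := Multiset.cons_erase hAS
  have hA0 : A ≠ 0 := by
    rintro rfl
    exact hm hA.symm
  refine ⟨by simp [hA0], ?_, fun T hT hT0 hTne hTsum ↦ ?_⟩
  · rw [Multiset.sum_add, add_comm, ← Multiset.sum_cons, hcons, hsum]
  set X := S.erase A.sum
  have hXS : X ≤ S := Multiset.erase_le _ S
  obtain ⟨U, V, hU, hV, rfl⟩ : ∃ U V, U ≤ X ∧ V ≤ A ∧ T = U + V :=
    ⟨T ∩ X, T - X, Multiset.inter_le_right, tsub_le_iff_left.2 hT,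
      by rw [add_comm, Multiset.sub_add_inter]⟩
  have hπU : π U.sum = 0 := by
    rw [map_multiset_sum]
    refine Multiset.sum_eq_zero fun y hy ↦ ?_
    obtain ⟨x, hx, rfl⟩ := Multiset.mem_map.1 hy
    exact hπS x (Multiset.mem_of_le (hU.trans hXS) hx)
  have hπV : π V.sum = 0 := by
    have h := congrArg π hTsum
    rwa [Multiset.sum_add, π.map_add, hπU, zero_add, π.map_zero] at h
  rcases card_eq_zero_or_eq_of_map_sum_eq_zero π (fun x hx ↦ hπA x (Multiset.mem_of_le hV hx))
    (hA ▸ Multiset.card_le_card hV) hπV with hV0 | hVm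
  · obtain rfl := Multiset.card_eq_zero.1 hV0
    rw [add_zero] at hT0 hTsum
    have hUS : U < S := hU.trans_lt (Multiset.erase_lt.2 hAS)
    exact hmin U hUS.le hT0 hUS.ne hTsum
  · obtain rfl : V = A := Multiset.eq_of_le_of_card_le hV (hA.trans hVm.symm).le
    refine hmin (V.sum ::ₘ U) ?_ Multiset.cons_ne_zero ?_ ?_
    · exact hcons ▸ Multiset.cons_le_cons _ hU
    · rw [← hcons, Ne, Multiset.cons_inj_right]
      rintro rfl
      exact hTne rfl
    · rw [Multiset.sum_cons, add_comm, ← Multiset.sum_add, hTsum]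

end MinimalZeroSum

section StrongDavenport

variable {G H : Type*}

lemma bddAbove_card_isMinimalZeroSum (G : Type*) [AddCommMonoid G] [Finite G] (k : ℕ) :
    BddAbove {m | ∃ S : Multiset G, IsMinimalZeroSum S ∧ cmul 1 S ≤ k ∧ card S = m} := by
  classical
  have := Fintype.ofFinite G
  refine ⟨k + Fintype.card G, ?_⟩
  rintro _ ⟨S, -, hk, rfl⟩
  rw [← cmul_one_add_card_toFinset S]
  exact Nat.add_le_add hk (Finset.card_le_univ _)

lemma IsMinimalZeroSum.card_le_SDk [AddCommMonoid G] [Finite G] {S : Multiset G} {k : ℕ}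
    (hS : IsMinimalZeroSum S) (hk : cmul 1 S ≤ k) : card S ≤ SDk G k :=
  le_csSup (bddAbove_card_isMinimalZeroSum G k) ⟨S, hS, hk, rfl⟩

lemma exists_isMinimalZeroSum_card_eq_SDk (G : Type*) [AddCommMonoid G] [Finite G] (k : ℕ) :
    ∃ S : Multiset G, IsMinimalZeroSum S ∧ cmul 1 S ≤ k ∧ card S = SDk G k := by
  have hk : cmul 1 ({0} : Multiset G) ≤ k :=
    (cmul_one_eq_zero_of_nodup (Multiset.nodup_singleton 0)).trans_le k.zero_le
  exact Nat.sSup_mem (s := {m | ∃ S : Multiset G, IsMinimalZeroSum S ∧ cmul 1 S ≤ k ∧ card S = m})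
    ⟨1, {0}, isMinimalZeroSum_singleton_zero, hk, Multiset.card_singleton 0⟩
    (bddAbove_card_isMinimalZeroSum G k)

lemma two_le_SDk_succ (G : Type*) [AddCommGroup G] [Finite G] [Nontrivial G] (k : ℕ) :
    2 ≤ SDk G (k + 1) := by
  obtain ⟨g, hg⟩ := exists_ne (0 : G)
  refine (isMinimalZeroSum_pair_neg hg).card_le_SDk ((cmul_one_cons_le g {-g}).trans ?_)
  rw [cmul_one_eq_zero_of_nodup (Multiset.nodup_singleton _)]
  lia

lemma SDk_le_SDk_of_injective [AddCommMonoid G] [AddCommMonoid H] [Finite H] (f : G →+ H)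
    (hf : Function.Injective f) (k : ℕ) : SDk G k ≤ SDk H k := by
  have := Finite.of_injective f hf
  obtain ⟨S, hS, hk, hcard⟩ := exists_isMinimalZeroSum_card_eq_SDk G k
  rw [← hcard, ← Multiset.card_map f S]
  exact (hS.map f hf).card_le_SDk ((cmul_map_of_injective 1 hf S).trans_le hk)

end StrongDavenport

section SubsetSums

variable {H : Type*} [AddCommGroup H]

lemma sum_univ_eq_zero_of_two_nsmul_eq_zero [Fintype H] (htwo : ∀ x : H, 2 • x = 0)
    (hcard : 2 < Fintype.card H) : ∑ x : H, x = 0 := by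
  let _ : Module (ZMod 2) H := AddCommGroup.zmodModule htwo
  rw [← Module.forall_dual_apply_eq_zero_iff (ZMod 2)]
  intro f
  have hf : ¬ Function.Injective f := fun hinj ↦ by
    have := Fintype.card_le_of_injective f hinj
    rw [ZMod.card] at this
    lia
  obtain ⟨a, hfa, ha⟩ : ∃ a, f a = 0 ∧ a ≠ 0 := by
    simpa [injective_iff_map_eq_zero] using hf
  rw [map_sum]
  refine Finset.sum_involution (fun x _ ↦ x + a) (fun x _ ↦ ?_) (fun x _ _ ↦ by simpa using ha)
    (fun x _ ↦ Finset.mem_univ _) (fun x _ ↦ ?_)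
  · rw [f.map_add, hfa, add_zero, CharTwo.add_self_eq_zero]
  · rw [add_assoc, ← two_nsmul a, htwo, add_zero]

lemma exists_card_eq_two_sum_eq {g x : H} (hx : 2 • x ≠ g) :
    ∃ A : Finset H, A.card = 2 ∧ ∑ a ∈ A, a = g := by
  classical
  have hne : x ≠ g - x := fun h ↦ hx (by rwa [two_nsmul, ← eq_sub_iff_add_eq])
  exact ⟨{x, g - x}, Finset.card_pair hne, by rw [Finset.sum_pair hne, add_sub_cancel]⟩

variable [Fintype H]

lemma exists_card_eq_sub_sum_notMem {K : AddSubgroup H} (hK : K ≠ ⊤) (g : H) {j : ℕ}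
    (hj : j ≠ 0) (hjcard : j < Fintype.card H) :
    ∃ C : Finset H, C.card = j ∧ g - ∑ c ∈ C, c ∉ K := by
  classical
  obtain ⟨a, ha⟩ : ∃ a, a ∉ K := by simpa [AddSubgroup.eq_top_iff'] using hK
  have ha0 : a ≠ 0 := fun h ↦ ha (h ▸ K.zero_mem)
  obtain ⟨D, hD, hDcard⟩ := Finset.exists_subset_card_eq (s := ({0, a}ᶜ : Finset H)) (n := j - 1)
    (by rw [Finset.card_compl, Finset.card_pair ha0.symm]; lia)
  have hD0 : 0 ∉ D := fun h ↦ by simpa using hD h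
  have hDa : a ∉ D := fun h ↦ by simpa using hD h
  by_cases hmem : g - ∑ c ∈ insert 0 D, c ∈ K
  · refine ⟨insert a D, by rw [Finset.card_insert_of_notMem hDa]; lia, fun h ↦ ha ?_⟩
    have hdiff := K.sub_mem hmem h
    rwa [Finset.sum_insert hD0, Finset.sum_insert hDa, zero_add, sub_sub_sub_cancel_left,
      add_sub_cancel_right] at hdiff
  · exact ⟨insert 0 D, by rw [Finset.card_insert_of_notMem hD0]; lia, hmem⟩

lemma exists_card_eq_subsingleton_two_nsmul_eq (g : H) {j : ℕ} (hj : j ≠ 0)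
    (hjcard : j < Fintype.card H) :
    ∃ C : Finset H, C.card = j ∧ {x : H | 2 • x = g - ∑ c ∈ C, c}.Subsingleton := by
  by_cases hinj : Function.Injective (nsmulAddMonoidHom (α := H) 2)
  · obtain ⟨C, -, hC⟩ := Finset.exists_subset_card_eq (s := (Finset.univ : Finset H)) hjcard.le
    exact ⟨C, hC, fun x hx y hy ↦ hinj (hx.trans hy.symm)⟩
  · have hrange : (nsmulAddMonoidHom (α := H) 2).range ≠ ⊤ := by
      rwa [Ne, AddMonoidHom.range_eq_top, ← Finite.injective_iff_surjective]
    obtain ⟨C, hC, hmem⟩ := exists_card_eq_sub_sum_notMem hrange g hj hjcard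
    exact ⟨C, hC, fun x hx ↦ absurd ⟨x, hx⟩ hmem⟩

lemma exists_card_eq_add_two_sum_eq (g : H) (C : Finset H)
    (hC : {x : H | 2 • x = g - ∑ c ∈ C, c}.Subsingleton) (hcard : 2 * C.card + 1 < Fintype.card H) :
    ∃ A : Finset H, A.card = C.card + 2 ∧ ∑ a ∈ A, a = g := by
  classical
  set h := g - ∑ c ∈ C, c with hh
  let bad : Finset H := C ∪ C.image (h - ·) ∪ Finset.univ.filter (2 • · = h)
  have hbad : bad.card < Fintype.card H := by
    have hroots : (Finset.univ.filter (2 • · = h)).card ≤ 1 :=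
      Finset.card_le_one.2 fun x hx y hy ↦ hC (by simpa using hx) (by simpa using hy)
    have hunion : bad.card ≤ _ := Finset.card_union_le _ _
    have hunion' := Finset.card_union_le C (C.image (h - ·))
    have himage : (C.image (h - ·)).card ≤ C.card := Finset.card_image_le
    lia
  obtain ⟨x, -, hx⟩ := Finset.exists_mem_notMem_of_card_lt_card
    (hbad.trans_eq Finset.card_univ.symm)
  simp only [bad, Finset.mem_union, Finset.mem_image, Finset.mem_filter, Finset.mem_univ,
    true_and, not_or, not_exists, not_and] at hx
  obtain ⟨⟨hxC, hximage⟩, hxroot⟩ := hx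
  have hyC : h - x ∉ C := fun hy ↦ hximage _ hy (sub_sub_cancel h x)
  have hxy : x ≠ h - x := fun e ↦ hxroot (by rwa [two_nsmul, ← eq_sub_iff_add_eq])
  have hxins : x ∉ insert (h - x) C := by simp [hxy, hxC]
  refine ⟨insert x (insert (h - x) C), ?_, ?_⟩
  · rw [Finset.card_insert_of_notMem hxins, Finset.card_insert_of_notMem hyC]
  · rw [Finset.sum_insert hxins, Finset.sum_insert hyC, hh]
    abel

lemma exists_card_eq_sum_eq_of_two_mul_lt (g : H) {m : ℕ} (hm : 3 ≤ m)
    (hmcard : 2 * m < Fintype.card H + 3) : ∃ A : Finset H, A.card = m ∧ ∑ a ∈ A, a = g := by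
  obtain ⟨C, hC, hroots⟩ :=
    exists_card_eq_subsingleton_two_nsmul_eq g (j := m - 2) (by lia) (by lia)
  obtain ⟨A, hA, hsum⟩ := exists_card_eq_add_two_sum_eq g C hroots (by lia)
  exact ⟨A, by lia, hsum⟩

lemma exists_card_eq_sum_eq_of_compl {g : H} {m : ℕ} (hm : m ≤ Fintype.card H)
    (h : ∃ A : Finset H, A.card = Fintype.card H - m ∧ ∑ a ∈ A, a = ∑ x : H, x - g) :
    ∃ A : Finset H, A.card = m ∧ ∑ a ∈ A, a = g := by
  classical
  obtain ⟨A, hA, hsum⟩ := h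
  refine ⟨Aᶜ, by rw [Finset.card_compl]; lia, ?_⟩
  rw [← sub_sub_cancel (∑ x : H, x) g, ← hsum, eq_sub_iff_add_eq', Finset.sum_add_sum_compl]

lemma exists_card_eq_sum_eq {g : H} (hg : g ≠ 0) {m : ℕ} (hm : m ≠ 0)
    (hmcard : m < Fintype.card H) : ∃ A : Finset H, A.card = m ∧ ∑ a ∈ A, a = g := by
  have one (x : H) : ∃ A : Finset H, A.card = 1 ∧ ∑ a ∈ A, a = x := ⟨{x}, by simp⟩
  obtain rfl | rfl | hm3 : m = 1 ∨ m = 2 ∨ 3 ≤ m := by lia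
  · exact one g
  · exact exists_card_eq_two_sum_eq (x := 0) (by simpa using hg.symm)
  by_cases hmid : 2 * m < Fintype.card H + 3
  · exact exists_card_eq_sum_eq_of_two_mul_lt g hm3 hmid
  refine exists_card_eq_sum_eq_of_compl hmcard.le ?_
  obtain hm' | hm' | hm' : Fintype.card H - m = 1 ∨ Fintype.card H - m = 2 ∨
    3 ≤ Fintype.card H - m := by lia
  · exact hm' ▸ one _
  · obtain ⟨x, hx⟩ : ∃ x : H, 2 • x ≠ ∑ y : H, y - g := by
      by_contra! hall
      have hsum : ∑ y : H, y - g = 0 := by rw [← hall 0, nsmul_zero]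
      rw [sum_univ_eq_zero_of_two_nsmul_eq_zero (fun x ↦ (hall x).trans hsum) (by lia)] at hsum
      exact hg (by simpa using hsum)
    exact hm' ▸ exists_card_eq_two_sum_eq hx
  · exact exists_card_eq_sum_eq_of_two_mul_lt _ hm' (by lia)

end SubsetSums

section ProdZMod

variable {H : Type*} [AddCommGroup H]

lemma IsMinimalZeroSum.prod_zmod [DecidableEq H] {m : ℕ} (hm : m ≠ 0) {S A : Multiset H}
    (hS : IsMinimalZeroSum S) (hAS : A.sum ∈ S) (hA : card A = m) :
    IsMinimalZeroSum
      ((S.erase A.sum).map (·, (0 : ZMod m)) + A.map (·, (1 : ZMod m))) := by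
  let inl : H →+ H × ZMod m := AddMonoidHom.inl H (ZMod m)
  have hinl : Function.Injective inl := Prod.mk_left_injective 0
  have hsum : (A.map (·, (1 : ZMod m))).sum = inl A.sum := by
    refine Prod.ext ?_ ?_
    · exact (map_multiset_sum (AddMonoidHom.fst H (ZMod m)) _).trans (by simp [inl])
    · exact (map_multiset_sum (AddMonoidHom.snd H (ZMod m)) _).trans (by simp [inl, hA])
  have hmin := (hS.map inl hinl).erase_add hm (AddMonoidHom.snd H (ZMod m))
    (A := A.map (·, (1 : ZMod m)))
    (by rw [hsum]; exact Multiset.mem_map_of_mem inl hAS) (by simp [inl]) (by simp)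
    (by simpa using hA)
  rwa [hsum, ← Multiset.map_erase inl hinl] at hmin

variable [Finite H]

lemma SDk_add_le_SDk_prod_zmod [Nontrivial H] {m : ℕ} (hm : 1 < m) (d : ℕ)
    (hsum : ∀ g : H, g ≠ 0 → ∃ A : Multiset H, card A = m ∧ A.sum = g ∧ cmul 1 A ≤ d) (k : ℕ) :
    m - 1 + SDk H (k + 1) ≤ SDk (H × ZMod m) (k + d) := by
  classical
  have : Fact (1 < m) := ⟨hm⟩
  have : NeZero m := ⟨by lia⟩
  obtain ⟨S, hS, hk, hcard⟩ := exists_isMinimalZeroSum_card_eq_SDk H (k + 1)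
  obtain ⟨g, hg, hgk⟩ := exists_mem_cmul_one_erase_le hS.1 hk
  obtain ⟨A, hA, rfl, hAd⟩ :=
    hsum g (hS.ne_zero_of_mem (hcard ▸ two_le_SDk_succ H k) hg)
  have hdisj : Disjoint ((S.erase A.sum).map (·, (0 : ZMod m))) (A.map (·, (1 : ZMod m))) :=
    Multiset.disjoint_map_map.2 fun _ _ _ _ ↦ by simp
  have hle := (hS.prod_zmod (by lia) hg hA).card_le_SDk (k := k + d) <| by
    rw [cmul_add_of_disjoint 1 hdisj, cmul_map_of_injective 1 (Prod.mk_left_injective _),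
      cmul_map_of_injective 1 (Prod.mk_left_injective _)]
    exact Nat.add_le_add hgk hAd
  rw [Multiset.card_add, Multiset.card_map, Multiset.card_map, hA] at hle
  have := Multiset.card_erase_add_one hg
  lia

lemma SDk_succ_add_le_SDk_prod_zmod {m : ℕ} (hm : 1 < m) (hmcard : m < Nat.card H) (k : ℕ) :
    m - 1 + SDk H (k + 1) ≤ SDk (H × ZMod m) k := by
  have := Fintype.ofFinite H
  have : Nontrivial H := Finite.one_lt_card_iff_nontrivial.1 (hm.trans hmcard)
  refine SDk_add_le_SDk_prod_zmod hm 0 (fun g hg ↦ ?_) k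
  obtain ⟨A, hA, hsum⟩ := exists_card_eq_sum_eq hg (by lia : m ≠ 0)
    (by rwa [← Nat.card_eq_fintype_card])
  exact ⟨A.val, hA, by rw [← hsum, Finset.sum_val]; rfl, (cmul_one_eq_zero_of_nodup A.nodup).le⟩

lemma SDk_succ_add_le_SDk_succ_prod_zmod {m : ℕ} (hm : 1 < m) (hmcard : m ≤ Nat.card H) (k : ℕ) :
    m - 1 + SDk H (k + 1) ≤ SDk (H × ZMod m) (k + 1) := by
  have := Fintype.ofFinite H
  have : Nontrivial H := Finite.one_lt_card_iff_nontrivial.1 (hm.trans_le hmcard)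
  refine SDk_add_le_SDk_prod_zmod hm 1 (fun g hg ↦ ?_) k
  obtain ⟨A, hA, hsum⟩ := exists_card_eq_sum_eq hg (by lia : m - 1 ≠ 0)
    (by rw [← Nat.card_eq_fintype_card]; lia)
  refine ⟨0 ::ₘ A.val, ?_, ?_, ?_⟩
  · rw [Multiset.card_cons, Finset.card_val, hA]
    lia
  · rw [Multiset.sum_cons, zero_add, ← hsum, Finset.sum_val]
    rfl
  · exact (cmul_one_cons_le 0 A.val).trans_eq (by rw [cmul_one_eq_zero_of_nodup A.nodup])

end ProdZMod

section PiZMod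

variable {ι : Type*}

lemma nat_card_pi_zmod (n : ι → ℕ) (I : Finset ι) :
    Nat.card (∀ i : I, ZMod (n i)) = ∏ i ∈ I, n i := by
  simp only [Nat.card_pi, Nat.card_zmod, Finset.prod_coe_sort I n]

lemma SDk_zmod_le_SDk_pi_singleton {n : ι → ℕ} (t : ι) (ht : n t ≠ 0) (k : ℕ) :
    SDk (ZMod (n t)) k ≤ SDk (∀ i : ({t} : Finset ι), ZMod (n i)) k := by
  have : NeZero (n t) := ⟨ht⟩
  let e := AddEquiv.piUnique fun i : ({t} : Finset ι) ↦ ZMod (n i)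
  have : Finite (∀ i : ({t} : Finset ι), ZMod (n i)) :=
    Finite.of_equiv (ZMod (n t)) e.symm.toEquiv
  exact SDk_le_SDk_of_injective e.symm.toAddMonoidHom e.symm.injective k

variable [DecidableEq ι]

/-- The canonical homomorphism from `(∏ i ∈ I, A i) × A a` to `∏ i ∈ insert a I, A i`; it is an
isomorphism when `a ∉ I`. `Pi.single` is used to read `A i` as `A a` without a cast. -/
def piInsertHom (A : ι → Type*) [∀ i, AddCommMonoid (A i)] (a : ι) (I : Finset ι) :
    (∀ i : I, A i) × A a →+ ∀ i : ↥(insert a I), A i where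
  toFun x i := if h : (i : ι) ∈ I then x.1 ⟨i, h⟩ else Pi.single (M := A) a x.2 i
  map_zero' := by
    ext i
    simp
  map_add' x y := by
    ext i
    by_cases h : (i : ι) ∈ I <;> simp [h, Pi.single_add]

lemma piInsertHom_injective (A : ι → Type*) [∀ i, AddCommMonoid (A i)] {a : ι} {I : Finset ι}
    (ha : a ∉ I) : Function.Injective (piInsertHom A a I) := by
  intro x y hxy
  ext i
  · simpa [piInsertHom] using congrFun hxy ⟨i, Finset.mem_insert_of_mem i.2⟩
  · simpa [piInsertHom, ha] using congrFun hxy ⟨a, Finset.mem_insert_self a I⟩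

variable {n : ι → ℕ}

lemma SDk_prod_le_SDk_pi_insert (hn : ∀ i, n i ≠ 0) {I : Finset ι} {a : ι} (ha : a ∉ I) (k : ℕ) :
    SDk ((∀ i : I, ZMod (n i)) × ZMod (n a)) k ≤ SDk (∀ i : ↥(insert a I), ZMod (n i)) k := by
  have (i : ι) : NeZero (n i) := ⟨hn i⟩
  exact SDk_le_SDk_of_injective _ (piInsertHom_injective (fun i ↦ ZMod (n i)) ha) k

lemma SDk_succ_add_le_SDk_pi_insert (hn : ∀ i, 1 < n i) {I : Finset ι} {a : ι} (ha : a ∉ I)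
    (hlt : n a < ∏ i ∈ I, n i) (k : ℕ) :
    n a - 1 + SDk (∀ i : I, ZMod (n i)) (k + 1) ≤ SDk (∀ i : ↥(insert a I), ZMod (n i)) k := by
  have (i : ι) : NeZero (n i) := ⟨(hn i).ne_bot⟩
  exact (SDk_succ_add_le_SDk_prod_zmod (hn a) (hlt.trans_eq (nat_card_pi_zmod n I).symm) k).trans
    (SDk_prod_le_SDk_pi_insert (fun i ↦ (hn i).ne_bot) ha k)

lemma SDk_succ_add_le_SDk_succ_pi_insert (hn : ∀ i, 1 < n i) {I : Finset ι} {a : ι} (ha : a ∉ I)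
    (hle : n a ≤ ∏ i ∈ I, n i) (k : ℕ) :
    n a - 1 + SDk (∀ i : I, ZMod (n i)) (k + 1) ≤
      SDk (∀ i : ↥(insert a I), ZMod (n i)) (k + 1) := by
  have (i : ι) : NeZero (n i) := ⟨(hn i).ne_bot⟩
  exact (SDk_succ_add_le_SDk_succ_prod_zmod (hn a) (hle.trans_eq (nat_card_pi_zmod n I).symm)
    k).trans (SDk_prod_le_SDk_pi_insert (fun i ↦ (hn i).ne_bot) ha (k + 1))

end PiZMod

section Chain

variable {ι : Type*} [LinearOrder ι] {n : ι → ℕ}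

lemma sum_add_SDk_pi_le_SDk_pi_union (hn : ∀ i, 1 < n i) {I J : Finset ι} (hIJ : Disjoint I J)
    (hlt : ∀ i ∈ J, n i < ∏ j ∈ I ∪ {j ∈ J | j < i}, n j) (k : ℕ) :
    ∑ i ∈ J, (n i - 1) + SDk (∀ i : I, ZMod (n i)) (k + J.card) ≤
      SDk (∀ i : ↥(I ∪ J), ZMod (n i)) k := by
  induction J using Finset.induction_on_max generalizing k with
  | empty => rw [Finset.union_empty, Finset.sum_empty, Finset.card_empty, zero_add, add_zero]
  | insert a J hJa ih =>
    have haJ : a ∉ J := fun h ↦ (hJa a h).false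
    rw [Finset.disjoint_insert_right] at hIJ
    have hbelow_a : ({j ∈ insert a J | j < a} : Finset ι) = J := by
      rw [Finset.filter_insert, if_neg (lt_irrefl a), Finset.filter_true_of_mem hJa]
    have hbelow (i : ι) (hi : i ∈ J) :
        ({j ∈ insert a J | j < i} : Finset ι) = {j ∈ J | j < i} := by
      rw [Finset.filter_insert, if_neg (hJa i hi).not_gt]
    have hJ := ih hIJ.2
      (fun i hi ↦ hbelow i hi ▸ hlt i (Finset.mem_insert_of_mem hi)) (k + 1)
    have ha := SDk_succ_add_le_SDk_pi_insert hn (I := I ∪ J) (a := a) (by simp [hIJ.1, haJ])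
      (by simpa only [hbelow_a] using hlt a (Finset.mem_insert_self a J)) k
    rw [Finset.sum_insert haJ, Finset.card_insert_of_notMem haJ, Finset.union_insert,
      add_comm J.card, ← add_assoc k]
    lia

variable [LocallyFiniteOrderBot ι]

lemma lt_prod_union_Iio (hn : ∀ i, 1 < n i) {I : Finset ι} {t i : ι} (hit : i ≠ t)
    (hbelow : i < t → n i < ∏ j ∈ I, n j) (habove : t < i → n i < ∏ j ∈ Finset.Iio i, n j) :
    n i < ∏ j ∈ I ∪ Finset.Iio i, n j := by
  have hmono {K : Finset ι} (hK : K ⊆ I ∪ Finset.Iio i) :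
      ∏ j ∈ K, n j ≤ ∏ j ∈ I ∪ Finset.Iio i, n j :=
    Finset.prod_le_prod_of_subset_of_one_le' hK fun j _ _ ↦ (hn j).le
  rcases hit.lt_or_gt with hlt | hgt
  · exact (hbelow hlt).trans_le (hmono Finset.subset_union_left)
  · exact (habove hgt).trans_le (hmono Finset.subset_union_right)

variable [Fintype ι]

lemma sum_compl_add_SDk_pi_le_SDk_pi (hn : ∀ i, 1 < n i) (I : Finset ι)
    (hlt : ∀ i ∉ I, n i < ∏ j ∈ I ∪ Finset.Iio i, n j) (k : ℕ) :
    ∑ i ∈ Iᶜ, (n i - 1) + SDk (∀ i : I, ZMod (n i)) (k + Iᶜ.card) ≤ SDk (∀ i, ZMod (n i)) k := by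
  have (i : ι) : NeZero (n i) := ⟨(hn i).ne_bot⟩
  have hbelow (i : ι) : I ∪ {j ∈ Iᶜ | j < i} = I ∪ Finset.Iio i := by
    ext j
    simp only [Finset.mem_union, Finset.mem_filter, Finset.mem_compl, Finset.mem_Iio]
    tauto
  refine (sum_add_SDk_pi_le_SDk_pi_union hn disjoint_compl_right
    (fun i hi ↦ hbelow i ▸ hlt i (Finset.mem_compl.1 hi)) k).trans ?_
  have hmem (i : ι) : i ∈ I ∪ Iᶜ := by simp
  let unrestrict : (∀ i : ↥(I ∪ Iᶜ), ZMod (n i)) →+ ∀ i, ZMod (n i) :=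
    { toFun := fun x i ↦ x ⟨i, hmem i⟩, map_zero' := rfl, map_add' := fun _ _ ↦ rfl }
  exact SDk_le_SDk_of_injective unrestrict (fun x y hxy ↦ funext fun i ↦ congrFun hxy i) k

lemma sum_erase_add_SDk_zmod_le_of_forall_lt (hn : ∀ i, 1 < n i) {t : ι}
    (hbelow : ∀ i < t, n i < n t) (habove : ∀ i, t < i → n i < ∏ j ∈ Finset.Iio i, n j) (k : ℕ) :
    ∑ i ∈ Finset.univ.erase t, (n i - 1) + SDk (ZMod (n t)) (k + Fintype.card ι - 1) ≤
      SDk (∀ i, ZMod (n i)) k := by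
  have hstart := SDk_zmod_le_SDk_pi_singleton t (hn t).ne_bot (k + Fintype.card ι - 1)
  have hchain := sum_compl_add_SDk_pi_le_SDk_pi hn {t} (k := k) fun i hi ↦
    lt_prod_union_Iio hn (Finset.notMem_singleton.1 hi) (by simpa using hbelow i) (habove i)
  have hlevel : k + Fintype.card ι - 1 = k + ({t}ᶜ : Finset ι).card := by
    have := Fintype.card_pos_iff.2 ⟨t⟩
    rw [Finset.card_compl, Finset.card_singleton]
    lia
  rw [← hlevel, Finset.compl_singleton] at hchain
  lia

lemma sum_erase_add_SDk_zmod_le_of_forall_le (hn : ∀ i, 1 < n i) {t : ι} (ht : ¬ IsMin t)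
    (hbelow : ∀ i < t, n i ≤ n t) (habove : ∀ i, t < i → n i < ∏ j ∈ Finset.Iio i, n j) {k : ℕ}
    (hk : 2 < k + Fintype.card ι) :
    ∑ i ∈ Finset.univ.erase t, (n i - 1) + SDk (ZMod (n t)) (k + Fintype.card ι - 2) ≤
      SDk (∀ i, ZMod (n i)) k := by
  obtain ⟨z, hzt⟩ := not_isMin_iff.1 ht
  have hz : z ∉ ({t} : Finset ι) := Finset.notMem_singleton.2 hzt.ne
  have hpair : n t < ∏ j ∈ insert z {t}, n j := by
    rw [Finset.prod_pair hzt.ne]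
    exact lt_mul_of_one_lt_left (by have := hn t; lia) (hn z)
  have hstart := SDk_zmod_le_SDk_pi_singleton t (hn t).ne_bot (k + Fintype.card ι - 2)
  have hfirst := SDk_succ_add_le_SDk_succ_pi_insert hn hz (by simpa using hbelow z hzt)
    (k + Fintype.card ι - 3)
  have hchain := sum_compl_add_SDk_pi_le_SDk_pi hn (insert z {t}) (k := k) fun i hi ↦
    lt_prod_union_Iio hn (by rintro rfl; simp at hi)
      (fun h ↦ (hbelow i h).trans_lt hpair) (habove i)
  have hlevel : k + Fintype.card ι - 2 = k + (insert z {t} : Finset ι)ᶜ.card := by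
    have := Finset.card_le_univ (insert z {t} : Finset ι)
    rw [Finset.card_pair hzt.ne] at this
    rw [Finset.card_compl, Finset.card_pair hzt.ne]
    lia
  have hsum : ∑ i ∈ Finset.univ.erase t, (n i - 1) =
      n z - 1 + ∑ i ∈ (insert z {t} : Finset ι)ᶜ, (n i - 1) := by
    rw [Finset.compl_insert, Finset.compl_singleton,
      Finset.add_sum_erase _ (fun i ↦ n i - 1) (by simp [hzt.ne])]
  rw [← hlevel] at hchain
  rw [show k + Fintype.card ι - 3 + 1 = k + Fintype.card ι - 2 by lia] at hfirst
  lia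

end Chain

theorem SDk_lower_bound_general_general {ι : Type*} [LinearOrder ι] [Fintype ι]
    [LocallyFiniteOrderBot ι] (n : ι → ℕ) (hn : ∀ i, 1 < n i) (k : ℕ) (t : ι)
    (hts : ∀ s, t < s → n s < ∏ i ∈ Finset.Iio s, n i) :
    ((∀ i < t, n i < n t) →
      ∑ i ∈ Finset.univ.erase t, (n i - 1) + SDk (ZMod (n t)) (k + Fintype.card ι - 1) ≤
        SDk (∀ i, ZMod (n i)) k) ∧
    (¬ IsMin t → (∀ i < t, n i ≤ n t) → 2 < k + Fintype.card ι →
      ∑ i ∈ Finset.univ.erase t, (n i - 1) + SDk (ZMod (n t)) (k + Fintype.card ι - 2) ≤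
        SDk (∀ i, ZMod (n i)) k) :=
  ⟨fun hlt ↦ sum_erase_add_SDk_zmod_le_of_forall_lt hn hlt hts k,
    fun ht hle hk ↦ sum_erase_add_SDk_zmod_le_of_forall_le hn ht hle hts hk⟩

/-- Theorem (lower bounds for `SD_k` of `C_{n_1} ⊕ … ⊕ C_{n_r}`).
Indices are zero-based: `t : Fin r` with `1 ≤ t.val` corresponds to the
one-based index `t ∈ [2, r]`, and the hypothesis `hts` states
`n_s < Π_{i<s} n_i` for every `s > t`.
(1) If `n_{t−1} ≠ n_t`, then
`SD_k(G) ≥ Σ_{i ≠ t} (n_i − 1) + SD_{k+r−1}(C_{n_t})`.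
(2) If `k + r > 2`, then
`SD_k(G) ≥ Σ_{i ≠ t} (n_i − 1) + SD_{k+r−2}(C_{n_t})`. -/
theorem SDk_lower_bound_general (r : ℕ) (hr : 2 ≤ r) (n : Fin r → ℕ)
    (hn1 : ∀ i, 1 < n i) (hmono : ∀ i j : Fin r, i ≤ j → n i ≤ n j)
    (k : ℕ) (t : Fin r) (ht : 1 ≤ t.val)
    (hts : ∀ s : Fin r, t < s → n s < ∏ i ∈ Finset.Iio s, n i) :
    ((n ⟨t.val - 1, lt_of_le_of_lt (Nat.sub_le _ _) t.isLt⟩ ≠ n t) →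
      (∑ i ∈ Finset.univ.erase t, (n i - 1)) + SDk (ZMod (n t)) (k + r - 1) ≤
        SDk (∀ i : Fin r, ZMod (n i)) k) ∧
    (2 < k + r →
      (∑ i ∈ Finset.univ.erase t, (n i - 1)) + SDk (ZMod (n t)) (k + r - 2) ≤
        SDk (∀ i : Fin r, ZMod (n i)) k) := by
  have hnotMin : ¬ IsMin t := not_isMin_iff.2 ⟨⟨0, by lia⟩, ht⟩
  have hpred (i : Fin r) (hi : i < t) :
      n i ≤ n ⟨t.val - 1, lt_of_le_of_lt (Nat.sub_le _ _) t.isLt⟩ :=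
    hmono _ _ (Nat.le_sub_one_of_lt hi)
  have hpred_le := hmono ⟨t.val - 1, lt_of_le_of_lt (Nat.sub_le _ _) t.isLt⟩ t (Nat.sub_le _ _)
  have h := SDk_lower_bound_general_general n hn1 k t hts
  rw [Fintype.card_fin] at h
  exact ⟨fun hne ↦ h.1 fun i hi ↦ (hpred i hi).trans_lt (hpred_le.lt_of_ne hne),
    h.2 hnotMin fun i hi ↦ hmono i t hi.le⟩
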